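/- arXiv:1310.1781 — 2 statements merged into one kernel-verified Lean document; each statement's English description precedes it below -/
import Mathlib

section
/- Let λ ∈ ℝ with λ ≠ 0 and let Γ : ℝ² → ℝ be smooth. Define the matrices U = [[0, λ m1, 1], [λ n1, 0, λ m2], [1, λ n2, 0]] and Ṽ = −λ Γ · [[0, m1, 0], [n1, 0, m2], [0, n2, 0]]. Then the zero-curvature equation ∂ₜU − ∂ₓṼ + U·Ṽ − Ṽ·U = 0 holds identically on ℝ² if and only if (m1, m2, n1, n2) satisfies the system: ∂ₜm1 + ∂ₓ(Γ m1) − n2 Γ = 0, ∂ₜm2 + ∂ₓ(Γ m2) + n1 Γ = 0, ∂ₜn1 + ∂ₓ(Γ n1) + m2 Γ = 0, ∂ₜn2 + ∂ₓ(Γ n2) − m1 Γ = 0. -/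
/-!
Write `A` for the matrix with entries `m1, n1, m2, n2` and `E = e₁₃ + e₃₁`, so that
`U = lam • A + E` and `W = -(lam * Γ) • A`. Since `A` commutes with itself,
`[U, W] = -(lam * Γ) • [E, A]`, so the zero-curvature equation reads
`lam • (∂ₜ A + ∂ₓ (Γ A) - Γ [E, A]) = 0`. The commutator `[E, A]` is supported on the same four
entries as `A`, with values `n2, -m2, -n1, m1` at `(1,2), (2,1), (2,3), (3,2)`; as `lam ≠ 0`, these
entries give the four equations of the system and all others vanish identically.
-/

/-- Partial derivative with respect to the first (space) variable. -/
noncomputable def pX (f : ℝ × ℝ → ℝ) : ℝ × ℝ → ℝ :=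
  fun p => deriv (fun x => f (x, p.2)) p.1

/-- Partial derivative with respect to the second (time) variable. -/
noncomputable def pT (f : ℝ × ℝ → ℝ) : ℝ × ℝ → ℝ :=
  fun p => deriv (fun t => f (p.1, t)) p.2

theorem pT_const_mul (c : ℝ) (f : ℝ × ℝ → ℝ) (p : ℝ × ℝ) :
    pT (fun q => c * f q) p = c * pT f p := by
  simp [pT]

theorem pX_neg_mul_mul (c : ℝ) (g f : ℝ × ℝ → ℝ) (p : ℝ × ℝ) :
    pX (fun q => -(c * g q * f q)) p = -(c * pX (fun q => g q * f q) p) := by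
  simp [pX, mul_assoc]

theorem pT_const (c : ℝ) (p : ℝ × ℝ) : pT (fun _ => c) p = 0 := by
  simp [pT]

theorem pX_const (c : ℝ) (p : ℝ × ℝ) : pX (fun _ => c) p = 0 := by
  simp [pX]

theorem stmt_1
    (m1 m2 n1 n2 Γ : ℝ × ℝ → ℝ)
    (hm1 : ContDiff ℝ (⊤ : ℕ∞) m1) (hm2 : ContDiff ℝ (⊤ : ℕ∞) m2)
    (hn1 : ContDiff ℝ (⊤ : ℕ∞) n1) (hn2 : ContDiff ℝ (⊤ : ℕ∞) n2)
    (hΓ : ContDiff ℝ (⊤ : ℕ∞) Γ)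
    (lam : ℝ) (hlam : lam ≠ 0)
    (U W : ℝ × ℝ → Matrix (Fin 3) (Fin 3) ℝ)
    (hU : U = fun p => !![0, lam * m1 p, 1;
                          lam * n1 p, 0, lam * m2 p;
                          1, lam * n2 p, 0])
    (hW : W = fun p => (-lam * Γ p) • !![0, m1 p, 0;
                                         n1 p, 0, m2 p;
                                         0, n2 p, 0]) :
    (∀ p : ℝ × ℝ, ∀ i j : Fin 3,
        pT (fun q => U q i j) p - pX (fun q => W q i j) p
          + (U p * W p - W p * U p) i j = 0)
    ↔
    (∀ p : ℝ × ℝ,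
        pT m1 p + pX (fun q => Γ q * m1 q) p - n2 p * Γ p = 0 ∧
        pT m2 p + pX (fun q => Γ q * m2 q) p + n1 p * Γ p = 0 ∧
        pT n1 p + pX (fun q => Γ q * n1 q) p + m2 p * Γ p = 0 ∧
        pT n2 p + pX (fun q => Γ q * n2 q) p - m1 p * Γ p = 0) := by
  subst hU hW
  refine forall_congr' fun p => ?_
  simp only [Fin.forall_fin_succ, Matrix.sub_apply, Matrix.mul_apply, Fin.sum_univ_succ]
  simp [pT_const_mul, pX_neg_mul_mul, pT_const, pX_const]
  constructor
  · rintro ⟨⟨-, h12, -⟩, ⟨h21, -, h23⟩, -, h32, -⟩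
    refine ⟨?_, ?_, ?_, ?_⟩ <;> apply mul_left_cancel₀ hlam <;> linarith
  · rintro ⟨h1, h2, h3, h4⟩
    have e1 := congrArg (lam * ·) h1
    have e2 := congrArg (lam * ·) h2
    have e3 := congrArg (lam * ·) h3
    have e4 := congrArg (lam * ·) h4
    refine ⟨⟨?_, ?_, ?_⟩, ⟨?_, ?_, ?_⟩, ?_, ?_, ?_⟩ <;> linarith
end

section
/- Let Γ : ℝ² → ℝ be smooth and suppose smooth functions (m1, m2, n1, n2) satisfy the system: ∂ₜm1 + ∂ₓ(Γ m1) − n2 Γ = 0, ∂ₜm2 + ∂ₓ(Γ m2) + n1 Γ = 0, ∂ₜn1 + ∂ₓ(Γ n1) + m2 Γ = 0, ∂ₜn2 + ∂ₓ(Γ n2) − m1 Γ = 0. If moreover P = m1 n1 + m2 n2 > 0 everywhere on ℝ², then the local conservation law ∂ₜ(√P) + ∂ₓ(Γ √P) = 0 holds identically on ℝ². -/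
theorem hasDerivAt_pX {f : ℝ × ℝ → ℝ} (hf : ContDiff ℝ (⊤ : ℕ∞) f) (p : ℝ × ℝ) :
    HasDerivAt (fun x => f (x, p.2)) (pX f p) p.1 := by
  have hd : Differentiable ℝ f := hf.differentiable (by simp)
  have h : Differentiable ℝ (fun x : ℝ => f (x, p.2)) := by fun_prop
  exact (h p.1).hasDerivAt

theorem hasDerivAt_pT {f : ℝ × ℝ → ℝ} (hf : ContDiff ℝ (⊤ : ℕ∞) f) (p : ℝ × ℝ) :
    HasDerivAt (fun t => f (p.1, t)) (pT f p) p.2 := by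
  have hd : Differentiable ℝ f := hf.differentiable (by simp)
  have h : Differentiable ℝ (fun t : ℝ => f (p.1, t)) := by fun_prop
  exact (h p.2).hasDerivAt

theorem pX_mul {f g : ℝ × ℝ → ℝ} (hf : ContDiff ℝ (⊤ : ℕ∞) f) (hg : ContDiff ℝ (⊤ : ℕ∞) g)
    (p : ℝ × ℝ) : pX (fun q => f q * g q) p = pX f p * g p + f p * pX g p :=
  ((hasDerivAt_pX hf p).mul (hasDerivAt_pX hg p)).deriv

theorem pT_mul {f g : ℝ × ℝ → ℝ} (hf : ContDiff ℝ (⊤ : ℕ∞) f) (hg : ContDiff ℝ (⊤ : ℕ∞) g)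
    (p : ℝ × ℝ) : pT (fun q => f q * g q) p = pT f p * g p + f p * pT g p :=
  ((hasDerivAt_pT hf p).mul (hasDerivAt_pT hg p)).deriv

theorem pX_add {f g : ℝ × ℝ → ℝ} (hf : ContDiff ℝ (⊤ : ℕ∞) f) (hg : ContDiff ℝ (⊤ : ℕ∞) g)
    (p : ℝ × ℝ) : pX (fun q => f q + g q) p = pX f p + pX g p :=
  ((hasDerivAt_pX hf p).add (hasDerivAt_pX hg p)).deriv

theorem pT_add {f g : ℝ × ℝ → ℝ} (hf : ContDiff ℝ (⊤ : ℕ∞) f) (hg : ContDiff ℝ (⊤ : ℕ∞) g)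
    (p : ℝ × ℝ) : pT (fun q => f q + g q) p = pT f p + pT g p :=
  ((hasDerivAt_pT hf p).add (hasDerivAt_pT hg p)).deriv

theorem stmt_5
    (m1 m2 n1 n2 Γ : ℝ × ℝ → ℝ)
    (hm1 : ContDiff ℝ (⊤ : ℕ∞) m1) (hm2 : ContDiff ℝ (⊤ : ℕ∞) m2)
    (hn1 : ContDiff ℝ (⊤ : ℕ∞) n1) (hn2 : ContDiff ℝ (⊤ : ℕ∞) n2)
    (hΓ : ContDiff ℝ (⊤ : ℕ∞) Γ)
    (hsys : ∀ p : ℝ × ℝ,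
        pT m1 p + pX (fun q => Γ q * m1 q) p - n2 p * Γ p = 0 ∧
        pT m2 p + pX (fun q => Γ q * m2 q) p + n1 p * Γ p = 0 ∧
        pT n1 p + pX (fun q => Γ q * n1 q) p + m2 p * Γ p = 0 ∧
        pT n2 p + pX (fun q => Γ q * n2 q) p - m1 p * Γ p = 0)
    (P : ℝ × ℝ → ℝ)
    (hP : P = fun q => m1 q * n1 q + m2 q * n2 q)
    (hpos : ∀ p : ℝ × ℝ, 0 < P p) :
    ∀ p : ℝ × ℝ,
      pT (fun q => Real.sqrt (P q)) p + pX (fun q => Γ q * Real.sqrt (P q)) p = 0 := by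
  intro p
  obtain ⟨h1, h2, h3, h4⟩ := hsys p
  rw [pX_mul hΓ hm1] at h1
  rw [pX_mul hΓ hm2] at h2
  rw [pX_mul hΓ hn1] at h3
  rw [pX_mul hΓ hn2] at h4
  have hPs : ContDiff ℝ (⊤ : ℕ∞) P := by
    rw [hP]
    exact (hm1.mul hn1).add (hm2.mul hn2)
  have hSs : ContDiff ℝ (⊤ : ℕ∞) (fun q => Real.sqrt (P q)) :=
    hPs.sqrt fun q => (hpos q).ne'
  have transport_P : pT P p + Γ p * pX P p = -2 * pX Γ p * P p := by
    rw [hP, pT_add (hm1.mul hn1) (hm2.mul hn2), pX_add (hm1.mul hn1) (hm2.mul hn2),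
      pT_mul hm1 hn1, pT_mul hm2 hn2, pX_mul hm1 hn1, pX_mul hm2 hn2]
    linear_combination n1 p * h1 + n2 p * h2 + m1 p * h3 + m2 p * h4
  have hsT : pT (fun q => Real.sqrt (P q)) p = pT P p / (2 * Real.sqrt (P p)) :=
    ((hasDerivAt_pT hPs p).sqrt (hpos p).ne').deriv
  have hsX : pX (fun q => Real.sqrt (P q)) p = pX P p / (2 * Real.sqrt (P p)) :=
    ((hasDerivAt_pX hPs p).sqrt (hpos p).ne').deriv
  have hs : 0 < Real.sqrt (P p) := Real.sqrt_pos.2 (hpos p)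
  have hsq : Real.sqrt (P p) ^ 2 = P p := Real.sq_sqrt (hpos p).le
  rw [pX_mul hΓ hSs, hsT, hsX]
  field_simp
  linear_combination transport_P + 2 * pX Γ p * hsq
end
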